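/- arXiv:2006.16198 — 4 statements merged into one kernel-verified Lean document; each statement's English description precedes it below -/
import Mathlib

section
/- Let R be a commutative ring with identity, let n ≥ 1 and let a_0, a_1, …, a_n ∈ R. Then δ(a_0, a_1, …, a_n) = δ(1, a_1, a_2·a_0, …, a_i·a_0^{i-1}, …, a_n·a_0^{n-1}); that is, the Hessenberg–Toeplitz determinant with subdiagonal entry a_0 equals the one with subdiagonal entry 1 and first-row entries a_i·a_0^{i-1}. -/
/-!
The two determinants agree term by term in the Leibniz expansion. Let `b r c` be the entry of the
Hessenberg matrix with subdiagonal `1` and unscaled upper part `a (c - r + 1)`. With truncated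
subtraction, the left matrix has entries `b r c * a₀ ^ (r - c)` and the right one
`b r c * a₀ ^ (c - r)`. For a permutation `σ`, the total upward displacement `∑ (σ i - i)` equals
the total downward displacement `∑ (i - σ i)`, so both products carry the same power of `a₀`.
-/

/-- `hessDet n a₀ a` is the Hessenberg–Toeplitz determinant `δ(a₀, a 1, …, a n)`:
the determinant of the `n × n` matrix whose `(i,j)` entry (0-indexed) is
`a (j - i + 1)` if `j ≥ i`, is `a₀` if `i = j + 1`, and is `0` otherwise. -/
def hessDet {R : Type*} [CommRing R] (n : ℕ) (a₀ : R) (a : ℕ → R) : R :=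
  (Matrix.of fun i j : Fin n =>
    if (i : ℕ) ≤ (j : ℕ) then a ((j : ℕ) - (i : ℕ) + 1)
    else if (i : ℕ) = (j : ℕ) + 1 then a₀ else 0).det

/-- A permutation moves indices up by as much in total as it moves them down
(`-` is truncated subtraction in `ℕ`). -/
lemma sum_perm_tsub_eq {n : ℕ} (σ : Equiv.Perm (Fin n)) :
    ∑ i : Fin n, ((σ i : ℕ) - (i : ℕ)) = ∑ i : Fin n, ((i : ℕ) - (σ i : ℕ)) := by
  have hperm : ∑ i : Fin n, (σ i : ℕ) = ∑ i : Fin n, (i : ℕ) :=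
    Equiv.sum_comp σ (fun i : Fin n => (i : ℕ))
  have hadd : ∑ i : Fin n, (((σ i : ℕ) - (i : ℕ)) + (i : ℕ)) =
      ∑ i : Fin n, (((i : ℕ) - (σ i : ℕ)) + (σ i : ℕ)) :=
    Finset.sum_congr rfl fun i _ => by omega
  rw [Finset.sum_add_distrib, Finset.sum_add_distrib, hperm] at hadd
  exact Nat.add_right_cancel hadd

/-- `δ(a₀, a₁, …, aₙ) = δ(1, a₁, a₂·a₀, …, aᵢ·a₀^{i-1}, …, aₙ·a₀^{n-1})`. -/
theorem stmt0 {R : Type*} [CommRing R] (n : ℕ) (hn : 1 ≤ n) (a₀ : R) (a : ℕ → R) :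
    hessDet n a₀ a = hessDet n 1 (fun i => a i * a₀ ^ (i - 1)) := by
  have hleft : ∀ r c : ℕ,
      (if r ≤ c then a (c - r + 1) else if r = c + 1 then a₀ else 0) =
      (if r ≤ c then a (c - r + 1) else if r = c + 1 then 1 else 0) * a₀ ^ (r - c) := by
    intro r c
    split_ifs with h h'
    · simp [Nat.sub_eq_zero_of_le h]
    · simp [h']
    · simp
  have hright : ∀ r c : ℕ,
      (if r ≤ c then a (c - r + 1) * a₀ ^ (c - r + 1 - 1) else if r = c + 1 then 1 else 0) =
      (if r ≤ c then a (c - r + 1) else if r = c + 1 then 1 else 0) * a₀ ^ (c - r) := by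
    intro r c
    split_ifs with h h'
    · simp
    · simp [h']
    · simp
  simp only [hessDet, Matrix.det_apply', Matrix.of_apply]
  refine Finset.sum_congr rfl fun σ _ => ?_
  congr 1
  simp only [hleft, hright, Finset.prod_mul_distrib, Finset.prod_pow_eq_pow_sum,
    sum_perm_tsub_eq]
end

section
/- Let R be a commutative ring with identity and let {a_i}_{i≥1} be a sequence in R. For nonnegative integers m ≤ n let Δ(n,m) be the set of tuples (k_1, …, k_n) ∈ ℕ^n with k_1 + ⋯ + k_n = m and k_1 + 2k_2 + ⋯ + n·k_n = n, and define L(n,m) = Σ_{(k_1,…,k_n) ∈ Δ(n,m)} (m choose k_1, …, k_n)·a_1^{k_1}⋯a_n^{k_n} (multinomial coefficients), with L(n,m) = 0 for n < m. Then L satisfies: L(0,0) = 1, L(i,0) = 0 for i ≠ 0, and L(i, j+1) = a_1·L(i-1, j) + a_2·L(i-2, j) + ⋯ + a_{i-j}·L(j, j) for all 0 ≤ j < i. -/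
/-!
With the generating series `f = ∑_{t ≥ 1} a_t X^t`, the number `L(n,m)` is the coefficient of `X^n`
in `f ^ m` (`Lmul_eq_coeff`): modulo `X^(n+1)` the series `f` is the finite sum
`∑_{t = 1}^n a_t X^t`, whose `m`-th power is given by the multinomial theorem. The initial values
come from `f ^ 0 = 1`, and the recursion is the Cauchy product formula for `f ^ (j+1) = f * f ^ j`,
where the terms with `t > i - j` vanish because `X ^ j` divides `f ^ j`.
-/

/-- `Delta n m` is the set of tuples `(k₁, …, kₙ) ∈ ℕⁿ` with `k₁ + ⋯ + kₙ = m` and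
`k₁ + 2k₂ + ⋯ + n·kₙ = n` (every such tuple has all entries `≤ n`, so this filtered
finset contains all solutions). -/
def Delta (n m : ℕ) : Finset (Fin n → ℕ) :=
  (Fintype.piFinset fun _ => Finset.range (n + 1)).filter
    fun k => (∑ i, k i) = m ∧ (∑ i : Fin n, ((i : ℕ) + 1) * k i) = n

/-- `Lmul a n m = Σ_{(k₁,…,kₙ) ∈ Δ(n,m)} (m choose k₁,…,kₙ)·a₁^{k₁}⋯aₙ^{kₙ}`
(it is `0` for `n < m` since then `Δ(n,m)` is empty). -/
def Lmul {R : Type*} [CommRing R] (a : ℕ → R) (n m : ℕ) : R :=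
  ∑ k ∈ Delta n m,
    (Nat.multinomial Finset.univ k : R) * ∏ i : Fin n, a ((i : ℕ) + 1) ^ k i

open PowerSeries in
/-- The generating series `∑_{t ≥ 1} a_t X^t`; the value `a 0` plays no role. -/
noncomputable def genSeries {R : Type*} [CommRing R] (a : ℕ → R) : PowerSeries R :=
  PowerSeries.mk fun n => if n = 0 then 0 else a n

open PowerSeries in
theorem X_pow_dvd_genSeries_pow {R : Type*} [CommRing R] (a : ℕ → R) (j : ℕ) :
    (X : PowerSeries R) ^ j ∣ genSeries a ^ j := by
  apply pow_dvd_pow_of_dvd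
  rw [X_dvd_iff]
  simp [genSeries, ← coeff_zero_eq_constantCoeff_apply]

open PowerSeries in
/-- Modulo `X ^ (n + 1)` the generating series may be replaced by its truncation, even in powers. -/
theorem coeff_genSeries_pow {R : Type*} [CommRing R] (a : ℕ → R) (n m : ℕ) :
    coeff n (genSeries a ^ m) =
      coeff n ((∑ i : Fin n, C (a ((i : ℕ) + 1)) * (X : PowerSeries R) ^ ((i : ℕ) + 1)) ^ m) := by
  have h : (X : PowerSeries R) ^ (n + 1) ∣ genSeries a -
      ∑ i : Fin n, C (a ((i : ℕ) + 1)) * (X : PowerSeries R) ^ ((i : ℕ) + 1) := by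
    rw [X_pow_dvd_iff]
    intro k hk
    rw [Fin.sum_univ_eq_sum_range
      (fun i => C (a (i + 1)) * (X : PowerSeries R) ^ (i + 1)) n]
    simp only [map_sub, map_sum, genSeries, coeff_mk, coeff_C_mul, coeff_X_pow]
    rcases k with _ | k
    · simp
    · have hk' : k < n := by omega
      simp [hk']
  have h2 := X_pow_dvd_iff.1 (h.trans (sub_dvd_pow_sub_pow _ _ m)) n (Nat.lt_succ_self n)
  rwa [map_sub, sub_eq_zero] at h2

open PowerSeries in
theorem Lmul_eq_coeff {R : Type*} [CommRing R] (a : ℕ → R) (n m : ℕ) :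
    Lmul a n m = coeff n (genSeries a ^ m) := by
  rw [coeff_genSeries_pow, Finset.sum_pow_eq_sum_piAntidiag, map_sum]
  have key : ∀ k : Fin n → ℕ,
      coeff n ((Nat.multinomial Finset.univ k : PowerSeries R) *
        ∏ i : Fin n, (C (a ((i : ℕ) + 1)) * (X : PowerSeries R) ^ ((i : ℕ) + 1)) ^ k i) =
      if (∑ i : Fin n, ((i : ℕ) + 1) * k i) = n then
        (Nat.multinomial Finset.univ k : R) * ∏ i : Fin n, a ((i : ℕ) + 1) ^ k i else 0 := by
    intro k
    have : ((Nat.multinomial Finset.univ k : PowerSeries R) *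
        ∏ i : Fin n, (C (a ((i : ℕ) + 1)) * (X : PowerSeries R) ^ ((i : ℕ) + 1)) ^ k i) =
        C ((Nat.multinomial Finset.univ k : R) * ∏ i : Fin n, a ((i : ℕ) + 1) ^ k i) *
          X ^ (∑ i : Fin n, ((i : ℕ) + 1) * k i) := by
      simp only [mul_pow, Finset.prod_mul_distrib, ← pow_mul, Finset.prod_pow_eq_pow_sum, map_mul,
        map_prod, map_pow, map_natCast, mul_assoc]
    rw [this, coeff_C_mul, coeff_X_pow]
    simp [eq_comm]
  simp only [key]
  rw [← Finset.sum_filter, Lmul]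
  refine Finset.sum_congr ?_ fun _ _ => rfl
  ext k
  simp only [Delta, Finset.mem_filter, Fintype.mem_piFinset, Finset.mem_range,
    Finset.mem_piAntidiag, Finset.mem_univ, implies_true, and_true]
  refine ⟨fun h => h.2, fun h => ⟨fun i => ?_, h⟩⟩
  -- the weighted sum bounds every entry by `n`, so the box in `Delta` cuts nothing off
  have h1 : ((i : ℕ) + 1) * k i ≤ ∑ i : Fin n, ((i : ℕ) + 1) * k i :=
    Finset.single_le_sum (f := fun i : Fin n => ((i : ℕ) + 1) * k i)
      (fun _ _ => Nat.zero_le _) (Finset.mem_univ i)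
  have h2 : k i ≤ ((i : ℕ) + 1) * k i := Nat.le_mul_of_pos_left _ (Nat.succ_pos _)
  have h3 := h.2
  omega

/-- the multinomial double sequence `L(n,m)` satisfies `L(0,0) = 1`,
`L(i,0) = 0` for `i ≠ 0`, and the recursion
`L(i,j+1) = a₁·L(i-1,j) + ⋯ + a_{i-j}·L(j,j)` for all `0 ≤ j < i`. -/
theorem stmt5 {R : Type*} [CommRing R] (a : ℕ → R) :
    Lmul a 0 0 = 1 ∧
    (∀ i, i ≠ 0 → Lmul a i 0 = 0) ∧
    (∀ i j, j < i →
      Lmul a i (j + 1) = ∑ t ∈ Finset.Icc 1 (i - j), a t * Lmul a (i - t) j) := by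
  refine ⟨?_, ?_, ?_⟩
  · simp [Lmul_eq_coeff]
  · intro i hi
    simp [Lmul_eq_coeff, PowerSeries.coeff_one, hi]
  · intro i j hij
    simp only [Lmul_eq_coeff]
    rw [pow_succ', PowerSeries.coeff_mul,
      Finset.Nat.sum_antidiagonal_eq_sum_range_succ (fun p q =>
        PowerSeries.coeff p (genSeries a) * PowerSeries.coeff q (genSeries a ^ j))]
    symm
    have hsub : Finset.Icc 1 (i - j) ⊆ Finset.range i.succ := by
      intro t ht
      simp only [Finset.mem_Icc, Finset.mem_range] at ht ⊢
      omega
    rw [← Finset.sum_subset hsub]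
    · refine Finset.sum_congr rfl fun t ht => ?_
      have ht0 : t ≠ 0 := by
        have := (Finset.mem_Icc.1 ht).1
        omega
      simp [genSeries, ht0]
    · intro t ht ht'
      simp only [Finset.mem_Icc, Finset.mem_range] at ht ht'
      by_cases ht0 : t = 0
      · simp [genSeries, ht0]
      · rw [PowerSeries.X_pow_dvd_iff.1 (X_pow_dvd_genSeries_pow a j) (i - t) (by omega), mul_zero]
end

section
/- Let R be a commutative ring with identity, let {a_i}_{i≥1} be a sequence in R, and let X be an indeterminate over R. For n ≥ 1 let 𝒳_n(X) = δ(-X, a_1, …, a_n) ∈ R[X], the determinant of the n×n upper Hessenberg matrix over R[X] with first row (a_1, …, a_n), subdiagonal entries -X, and (i,j) entry a_{j-i+1} for j ≥ i. Then 𝒳_n(X) = Σ_{i=1}^{n} L(n,i)·X^{n-i}, where L(n,i) = Σ_{(k_1,…,k_n) ∈ Δ(n,i)} (i choose k_1, …, k_n)·a_1^{k_1}⋯a_n^{k_n}. -/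
namespace HessDet
open Finset

/-- The `(n + 1) × (n + 1)` Hessenberg–Toeplitz determinant whose first row has been replaced by
`(b 0, …, b n)` and whose subdiagonal entries are `-x`. -/
def rowDet {R : Type*} [CommRing R] (n : ℕ) (x : R) (a b : ℕ → R) : R :=
  (Matrix.of fun i j : Fin (n + 1) =>
    if (i : ℕ) = 0 then b j
    else if (i : ℕ) ≤ (j : ℕ) then a ((j : ℕ) - (i : ℕ) + 1)
    else if (i : ℕ) = (j : ℕ) + 1 then -x else 0).det

theorem hessDet_zero {R : Type*} [CommRing R] (x : R) (a : ℕ → R) : hessDet 0 x a = 1 := by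
  simp [hessDet]

theorem hessDet_succ_eq_rowDet {R : Type*} [CommRing R] (n : ℕ) (x : R) (a : ℕ → R) :
    hessDet (n + 1) (-x) a = rowDet n x a (fun j => a (j + 1)) := by
  unfold hessDet rowDet
  congr 1
  ext i j
  refine Fin.cases ?_ (fun i => ?_) i <;> simp

theorem rowDet_zero {R : Type*} [CommRing R] (x : R) (a b : ℕ → R) :
    rowDet 0 x a b = b 0 := by
  simp [rowDet]

/-- Expansion along the first column, whose only nonzero entries are `b 0` and `-x`. -/
theorem rowDet_succ {R : Type*} [CommRing R] (n : ℕ) (x : R) (a b : ℕ → R) :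
    rowDet (n + 1) x a b =
      b 0 * hessDet (n + 1) (-x) a + x * rowDet n x a (fun j => b (j + 1)) := by
  rw [rowDet, Matrix.det_succ_column_zero, Fin.sum_univ_succ, Fin.sum_univ_succ,
    Finset.sum_eq_zero]
  · have h1 : ((Matrix.of fun i j : Fin (n + 1 + 1) =>
        if (i : ℕ) = 0 then b j
        else if (i : ℕ) ≤ (j : ℕ) then a ((j : ℕ) - (i : ℕ) + 1)
        else if (i : ℕ) = (j : ℕ) + 1 then -x else 0).submatrix
          (Fin.succAbove 0) Fin.succ).det = hessDet (n + 1) (-x) a := by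
      unfold hessDet
      congr 1
      ext i j
      simp
    have h2 : ((Matrix.of fun i j : Fin (n + 1 + 1) =>
        if (i : ℕ) = 0 then b j
        else if (i : ℕ) ≤ (j : ℕ) then a ((j : ℕ) - (i : ℕ) + 1)
        else if (i : ℕ) = (j : ℕ) + 1 then -x else 0).submatrix
          (Fin.succAbove (Fin.succ 0)) Fin.succ).det = rowDet n x a (fun j => b (j + 1)) := by
      unfold rowDet
      congr 1
      ext i j
      refine Fin.cases ?_ (fun i => ?_) i
      · simp
      · simp
    rw [h1, h2]
    simp
  · intro i _
    simp

theorem rowDet_eq_sum {R : Type*} [CommRing R] (n : ℕ) (x : R) (a b : ℕ → R) :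
    rowDet n x a b = ∑ j ∈ range (n + 1), x ^ j * b j * hessDet (n - j) (-x) a := by
  induction n generalizing b with
  | zero => simp [rowDet_zero, hessDet_zero]
  | succ n ih =>
    rw [rowDet_succ, ih, sum_range_succ' _ (n + 1), mul_sum, add_comm]
    congr 1
    · refine sum_congr rfl fun j _ => ?_
      rw [Nat.add_sub_add_right, pow_succ]
      ring
    · simp

theorem hessDet_succ {R : Type*} [CommRing R] (n : ℕ) (x : R) (a : ℕ → R) :
    hessDet (n + 1) (-x) a =
      ∑ j ∈ range (n + 1), x ^ j * a (j + 1) * hessDet (n - j) (-x) a := by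
  rw [hessDet_succ_eq_rowDet, rowDet_eq_sum]

/-- The generating series `a₁ t + a₂ t² + ⋯`, written as `t` times a series so that the
vanishing of the low coefficients of its powers is visible. -/
noncomputable def genSeries {R : Type*} [CommRing R] (a : ℕ → R) : PowerSeries R :=
  PowerSeries.X * PowerSeries.mk fun j => a (j + 1)

theorem coeff_genSeries_pow_of_lt {R : Type*} [CommRing R] (a : ℕ → R) {n m : ℕ} (h : n < m) :
    PowerSeries.coeff n (genSeries a ^ m) = 0 := by
  rw [genSeries, mul_pow, PowerSeries.coeff_X_pow_mul', if_neg (by omega)]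

theorem coeff_succ_genSeries_pow_succ {R : Type*} [CommRing R] (a : ℕ → R) (n m : ℕ) :
    PowerSeries.coeff (n + 1) (genSeries a ^ (m + 1)) =
      ∑ j ∈ range (n + 1), a (j + 1) * PowerSeries.coeff (n - j) (genSeries a ^ m) := by
  rw [pow_succ', genSeries, mul_assoc, PowerSeries.coeff_succ_X_mul, PowerSeries.coeff_mul,
    Nat.sum_antidiagonal_eq_sum_range_succ_mk]
  simp

theorem hessDet_eq_sum_coeff {R : Type*} [CommRing R] (n : ℕ) (x : R) (a : ℕ → R) :
    hessDet n (-x) a =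
      ∑ i ∈ range (n + 1), PowerSeries.coeff n (genSeries a ^ i) * x ^ (n - i) := by
  induction n using Nat.strong_induction_on with
  | _ n ih =>
  cases n with
  | zero => simp [hessDet_zero]
  | succ n =>
    rw [hessDet_succ, sum_range_succ' _ (n + 1)]
    have h0 : PowerSeries.coeff (n + 1) (genSeries a ^ 0) = 0 := by
      simp [PowerSeries.coeff_one]
    rw [h0, zero_mul, add_zero]
    simp_rw [coeff_succ_genSeries_pow_succ, sum_mul]
    rw [sum_comm]
    refine sum_congr rfl fun j hj => ?_
    have hj' : j ≤ n := Nat.lt_succ_iff.mp (mem_range.mp hj)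
    rw [ih (n - j) (by omega), mul_sum]
    -- The terms with `n - j < i` vanish, so the range of `i` may be enlarged to `0, …, n`.
    rw [← sum_subset (s₁ := range (n - j + 1)) (s₂ := range (n + 1))]
    · refine sum_congr rfl fun i hi => ?_
      have hi' : i ≤ n - j := Nat.lt_succ_iff.mp (mem_range.mp hi)
      have : n + 1 - (i + 1) = j + (n - j - i) := by omega
      rw [this, pow_add]
      ring
    · exact range_subset_range.mpr (by omega)
    · intro i _ hi
      rw [mem_range, not_lt] at hi
      rw [coeff_genSeries_pow_of_lt a (by omega), mul_zero, zero_mul]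

theorem trunc_genSeries {R : Type*} [CommRing R] (a : ℕ → R) (n : ℕ) :
    PowerSeries.trunc (n + 1) (genSeries a) =
      ∑ i : Fin n, Polynomial.monomial ((i : ℕ) + 1) (a ((i : ℕ) + 1)) := by
  rw [PowerSeries.trunc_apply, ← Finset.range_eq_Ico, sum_range_succ']
  simp [genSeries, PowerSeries.coeff_succ_X_mul,
    Fin.sum_univ_eq_sum_range (fun i => Polynomial.monomial (i + 1) (a (i + 1)))]

theorem Delta_eq_filter (n m : ℕ) :
    Delta n m = (piAntidiag univ m).filter
      fun k : Fin n → ℕ => (∑ i : Fin n, ((i : ℕ) + 1) * k i) = n := by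
  ext k
  simp only [Delta, mem_filter, Fintype.mem_piFinset, mem_range, mem_piAntidiag]
  constructor
  · rintro ⟨-, h1, h2⟩
    exact ⟨⟨h1, by simp⟩, h2⟩
  · rintro ⟨⟨h1, -⟩, h2⟩
    refine ⟨fun i => ?_, h1, h2⟩
    have h := single_le_sum (f := fun i : Fin n => ((i : ℕ) + 1) * k i)
      (fun _ _ => Nat.zero_le _) (mem_univ i)
    simp only [h2] at h
    nlinarith

/-- The multinomial theorem, read off at the coefficient of `tⁿ`. Only the part of the series
of degree at most `n` matters there. -/
theorem coeff_genSeries_pow {R : Type*} [CommRing R] (a : ℕ → R) (n m : ℕ) :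
    PowerSeries.coeff n (genSeries a ^ m) = Lmul a n m := by
  have h := congrArg (fun p => Polynomial.coeff p n)
    (PowerSeries.trunc_trunc_pow (genSeries a) (n + 1) m)
  simp only [PowerSeries.coeff_trunc, Nat.lt_succ_self, if_true] at h
  rw [← h, trunc_genSeries, ← Polynomial.coe_pow, Polynomial.coeff_coe,
    sum_pow_eq_sum_piAntidiag, Polynomial.finsetSum_coeff, Lmul, Delta_eq_filter, sum_filter]
  refine sum_congr rfl fun k _ => ?_
  have hp : ∏ i : Fin n, Polynomial.monomial ((i : ℕ) + 1) (a ((i : ℕ) + 1)) ^ k i =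
      Polynomial.monomial (∑ i : Fin n, ((i : ℕ) + 1) * k i)
        (∏ i : Fin n, a ((i : ℕ) + 1) ^ k i) := by
    simp_rw [Polynomial.monomial_pow, ← Polynomial.C_mul_X_pow_eq_monomial, prod_mul_distrib,
      prod_pow_eq_pow_sum, map_prod]
  rw [hp, Polynomial.coeff_natCast_mul, Polynomial.coeff_monomial, mul_ite, mul_zero]

theorem genSeries_map {R S : Type*} [CommRing R] [CommRing S] (f : R →+* S) (a : ℕ → R) :
    genSeries (fun i => f (a i)) = PowerSeries.map f (genSeries a) := by
  ext n
  cases n <;> simp [genSeries, PowerSeries.coeff_succ_X_mul]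

end HessDet

/-- `𝒳ₙ(X) = δ(-X, a₁, …, aₙ) = Σ_{i=1}^{n} L(n,i)·X^{n-i}` in `R[X]`. -/
theorem stmt7 {R : Type*} [CommRing R] (a : ℕ → R) (n : ℕ) (hn : 1 ≤ n) :
    hessDet n (-(Polynomial.X : Polynomial R)) (fun i => Polynomial.C (a i)) =
      ∑ i ∈ Finset.Icc 1 n, Polynomial.C (Lmul a n i) * Polynomial.X ^ (n - i) := by
  -- The term `i = 0` vanishes because `f ^ 0 = 1` has no `tⁿ` coefficient for `n ≥ 1`.
  rw [HessDet.hessDet_eq_sum_coeff, Finset.range_eq_Ico,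
    Finset.sum_eq_sum_Ico_succ_bot (Nat.succ_pos n), pow_zero, PowerSeries.coeff_one,
    if_neg (by omega), zero_mul, zero_add]
  refine Finset.sum_congr (by ext; simp) fun i _ => ?_
  rw [HessDet.genSeries_map, ← map_pow, PowerSeries.coeff_map, HessDet.coeff_genSeries_pow]
end

section
/- Let R be a commutative ring with identity, let n ≥ 1, let r, c_0, …, c_{n-1} ∈ R, and let C = circ_{n,r}(c_0, …, c_{n-1}) be the n×n r-circulant matrix. For k ≥ 0 let c_m(k) denote the coefficient of x^m in (c_0 + c_1 x + ⋯ + c_{n-1} x^{n-1})^k (so c_m(k) = 0 for m > k(n-1)). Then C^k is again an r-circulant matrix, and for each p with 0 ≤ p ≤ n-1 its (0,p) entry equals Σ_{m ≥ 0, m ≡ p (mod n)} c_m(k)·r^{⌊m/n⌋}, where ⌊m/n⌋ is the floor of m/n (the sum is finite). -/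
/-!
Let `P` be the `r`-twisted cyclic shift (`shiftMat`) and `f = c₀ + c₁ x + ⋯ + c_{n-1} x^{n-1}`.
The `r`-circulant matrix `C` is `f(P)` (`circMat_eq_aeval`), so `C ^ k = (f ^ k)(P)` is the sum
of the `c_m(k) P ^ m`. The entries of `P ^ m` are explicit (`shiftMat_pow_apply`): `P ^ m` is
`r`-circulant, with first row `r ^ ⌊m/n⌋` in column `m mod n` and zeros elsewhere. Summing
(`sum_smul_shiftMat_pow`) gives both the circulant shape and the first row of `C ^ k`.
-/

/-- `circMat n r c` is the `n × n` `r`-circulant matrix `circ_{n,r}(c 0, …, c (n-1))`: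
its `(i,j)` entry (0-indexed) is `c (j-i)` if `j ≥ i` and `r·c (n+j-i)` if `j < i`. -/
def circMat {R : Type*} [CommRing R] (n : ℕ) (r : R) (c : ℕ → R) :
    Matrix (Fin n) (Fin n) R :=
  Matrix.of fun i j =>
    if (i : ℕ) ≤ (j : ℕ) then c ((j : ℕ) - (i : ℕ))
    else r * c (n + (j : ℕ) - (i : ℕ))

/-- The `r`-twisted cyclic shift `P`: row `i` has its only possibly nonzero entry in column
`(i + 1) mod n`, equal to `1` for `i < n - 1` and to `r` for `i = n - 1`. For `n = 1` it is
the matrix `(r)`. -/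
def shiftMat {R : Type*} [CommRing R] (n : ℕ) (r : R) : Matrix (Fin n) (Fin n) R :=
  Matrix.of fun i j => if ((i : ℕ) + 1) % n = (j : ℕ) then r ^ (((i : ℕ) + 1) / n) else 0

/-- Moving `m` steps to the right from column `i` picks up one factor `r` for every
wrap-around. -/
lemma shiftMat_pow_apply {R : Type*} [CommRing R] (n : ℕ) (r : R) (m : ℕ) (i j : Fin n) :
    (shiftMat n r ^ m) i j =
      if ((i : ℕ) + m) % n = (j : ℕ) then r ^ (((i : ℕ) + m) / n) else 0 := by
  have hn : 0 < n := i.pos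
  induction m generalizing j with
  | zero =>
    simp [Matrix.one_apply, Nat.mod_eq_of_lt i.isLt, Nat.div_eq_of_lt i.isLt, Fin.ext_iff]
  | succ m ih =>
    rw [pow_succ, Matrix.mul_apply,
      Finset.sum_eq_single (⟨((i : ℕ) + m) % n, Nat.mod_lt _ hn⟩ : Fin n)]
    · rw [ih]
      have hmod : (((i : ℕ) + m) % n + 1) % n = ((i : ℕ) + (m + 1)) % n := by
        rw [Nat.mod_add_mod, add_assoc]
      have hdiv : ((i : ℕ) + m) / n + (((i : ℕ) + m) % n + 1) / n
          = ((i : ℕ) + (m + 1)) / n := by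
        conv_rhs => rw [← add_assoc, ← Nat.div_add_mod ((i : ℕ) + m) n, add_assoc,
          Nat.mul_add_div hn]
      simp only [shiftMat, Matrix.of_apply, if_true, hmod, mul_ite, mul_zero, ← pow_add, hdiv]
    · intro b _ hb
      rw [ih, if_neg, zero_mul]
      intro h
      exact hb (Fin.ext h.symm)
    · simp

lemma circMat_congr {R : Type*} [CommRing R] (n : ℕ) (r : R) {c d : ℕ → R}
    (h : ∀ t < n, c t = d t) : circMat n r c = circMat n r d := by
  ext i j
  have hi := i.isLt
  have hj := j.isLt
  simp only [circMat, Matrix.of_apply]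
  split_ifs
  · exact h _ (by omega)
  · rw [h _ (by omega)]

/-- A linear combination of powers of the shift is `r`-circulant; its first row is obtained
by reducing exponents via `P ^ n = r`. -/
lemma sum_smul_shiftMat_pow {R : Type*} [CommRing R] (n : ℕ) (r : R) (s : Finset ℕ)
    (g : ℕ → R) :
    ∑ m ∈ s, g m • shiftMat n r ^ m =
      circMat n r fun t => ∑ m ∈ s with m % n = t, g m * r ^ (m / n) := by
  ext i j
  have hi := i.isLt
  have hj := j.isLt
  have hn : 0 < n := i.pos
  simp only [Matrix.sum_apply, Matrix.smul_apply, shiftMat_pow_apply, circMat,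
    Matrix.of_apply, Finset.sum_filter, smul_eq_mul]
  -- For `m = n * q + t` with `t < n`, whether `i + t` wraps around decides both the
  -- target column and the exponent of `r`.
  have hcol (m : ℕ) : ((i : ℕ) + m) % n =
      if (i : ℕ) + m % n < n then (i : ℕ) + m % n else (i : ℕ) + m % n - n := by
    have := Nat.mod_lt m hn
    rw [← Nat.add_mod_mod]
    split_ifs with h
    · exact Nat.mod_eq_of_lt h
    · rw [Nat.mod_eq_sub_mod (by omega), Nat.mod_eq_of_lt (by omega)]
  have hexp (m : ℕ) : ((i : ℕ) + m) / n =
      if (i : ℕ) + m % n < n then m / n else m / n + 1 := by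
    have := Nat.mod_lt m hn
    have e : (i : ℕ) + m = n * (m / n) + ((i : ℕ) + m % n) := by
      have := Nat.div_add_mod m n
      omega
    rw [e, Nat.mul_add_div hn]
    split_ifs with h
    · rw [Nat.div_eq_of_lt h, add_zero]
    · rw [(Nat.div_eq_iff hn).2 (by omega : 1 * n ≤ (i : ℕ) + m % n ∧ (i : ℕ) + m % n ≤ 1 * n + n - 1)]
  split_ifs with hij
  · refine Finset.sum_congr rfl fun m _ => ?_
    have := Nat.mod_lt m hn
    rw [hcol, hexp]
    by_cases h : m % n = (j : ℕ) - i
    · have hw : (i : ℕ) + m % n < n := by omega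
      simp only [if_pos hw]
      rw [if_pos h, if_pos (by omega)]
    · rw [if_neg h, if_neg (by split_ifs <;> omega), mul_zero]
  · rw [Finset.mul_sum]
    refine Finset.sum_congr rfl fun m _ => ?_
    have := Nat.mod_lt m hn
    rw [hcol, hexp]
    by_cases h : m % n = n + (j : ℕ) - i
    · have hw : ¬ (i : ℕ) + m % n < n := by omega
      simp only [if_neg hw]
      rw [if_pos h, if_pos (by omega)]
      ring
    · rw [if_neg h, if_neg (by split_ifs <;> omega), mul_zero, mul_zero]

lemma circMat_eq_aeval {R : Type*} [CommRing R] (n : ℕ) (r : R) (c : ℕ → R) :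
    circMat n r c = Polynomial.aeval (shiftMat n r)
      (∑ i ∈ Finset.range n, Polynomial.C (c i) * Polynomial.X ^ i) := by
  simp only [map_sum, map_mul, Polynomial.aeval_C, map_pow, Polynomial.aeval_X,
    ← Algebra.smul_def]
  rw [sum_smul_shiftMat_pow]
  refine circMat_congr n r fun t ht => ?_
  rw [Finset.sum_filter, Finset.sum_eq_single t]
  · simp [Nat.mod_eq_of_lt ht, Nat.div_eq_of_lt ht]
  · intro b hb hbt
    rw [if_neg]
    rwa [Nat.mod_eq_of_lt (Finset.mem_range.1 hb)]
  · intro h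
    exact absurd (Finset.mem_range.2 ht) h

/-- `C^k` is again `r`-circulant and its `(0,p)` entry equals
`Σ_{m ≡ p (mod n)} c_m(k)·r^{⌊m/n⌋}`, where `c_m(k)` is the coefficient of `xᵐ` in
`(c₀ + c₁x + ⋯ + c_{n-1}x^{n-1})^k`; the sum is finite since `c_m(k) = 0` for
`m > k(n-1)`. -/
theorem stmt10 {R : Type*} [CommRing R] (n : ℕ) (hn : 1 ≤ n) (r : R) (c : ℕ → R) (k : ℕ) :
    (∃ d : ℕ → R, (circMat n r c) ^ k = circMat n r d) ∧
    ∀ p : Fin n,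
      ((circMat n r c) ^ k) ⟨0, hn⟩ p =
        ∑ m ∈ (Finset.range (k * (n - 1) + 1)).filter fun m => m % n = (p : ℕ),
          ((∑ i ∈ Finset.range n, Polynomial.C (c i) * Polynomial.X ^ i) ^ k).coeff m
            * r ^ (m / n) := by
  have key : circMat n r c ^ k = circMat n r fun t =>
      ∑ m ∈ (Finset.range (k * (n - 1) + 1)).filter fun m => m % n = t,
        ((∑ i ∈ Finset.range n, Polynomial.C (c i) * Polynomial.X ^ i) ^ k).coeff m
          * r ^ (m / n) := by
    have hdeg : ((∑ i ∈ Finset.range n,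
        Polynomial.C (c i) * Polynomial.X ^ i) ^ k).natDegree < k * (n - 1) + 1 := by
      refine Nat.lt_succ_of_le (Polynomial.natDegree_pow_le_of_le k ?_)
      refine Polynomial.natDegree_sum_le_of_forall_le _ _ fun i hi => ?_
      have := Finset.mem_range.1 hi
      exact (Polynomial.natDegree_C_mul_X_pow_le _ _).trans (by omega)
    rw [← sum_smul_shiftMat_pow, circMat_eq_aeval, ← map_pow,
      Polynomial.aeval_eq_sum_range' hdeg]
  refine ⟨⟨_, key⟩, fun p => ?_⟩
  rw [key]
  simp only [circMat, Matrix.of_apply, Nat.zero_le, if_true, Nat.sub_zero]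
end
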